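/- Let f be a harmonic mapping of the open unit disk U = {z ∈ ℂ : |z| < 1} into the open unit ball Bⁿ = {x ∈ ℝⁿ : |x| < 1}, let b ∈ ℝⁿ be a unit vector, and let h ∈ ℝ² be a unit vector. Then for every z ∈ U, the directional derivative of f at z in the direction h satisfies |⟨D f(z)·h, b⟩| ≤ (4/π) · (1 - ⟨f(z), b⟩²)/(1 - |z|²). -/

import Mathlib

open Complex Metric Real InnerProductSpace

/-!
A scalar component `⟪f, b⟫` of `f` is a real harmonic function with values in `(-1, 1)`, so on the
disk it is the real part of a holomorphic function `F` with values in the strip `|re w| < 1`. The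
map `w ↦ exp (π i w / 2)` carries the strip to the right half-plane, and the Schwarz–Pick inequality
for maps of the disk to the half-plane, pulled back to `F`, reads
`‖deriv F z‖ ≤ (4 / π) cos (π (re F z) / 2) / (1 - ‖z‖ ^ 2)`. Finally `cos (π u / 2) ≤ 1 - u ^ 2` on
`[-1, 1]`.
-/

open scoped ComplexConjugate Laplacian

section CosineBound

theorem mul_sqrt_two_div_two_le_sin {u : ℝ} (hu₀ : 0 ≤ u) (hu₁ : u ≤ 1) :
    u * (√2 / 2) ≤ Real.sin (u * (π / 4)) := by
  have hconcave := strictConcaveOn_sin_Icc.concaveOn.2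
    (⟨le_rfl, pi_pos.le⟩ : (0 : ℝ) ∈ Set.Icc 0 π)
    (⟨by positivity, by linarith [pi_pos]⟩ : π / 4 ∈ Set.Icc 0 π)
    (sub_nonneg.2 hu₁) hu₀ (sub_add_cancel 1 u)
  simpa only [smul_eq_mul, mul_zero, zero_add, Real.sin_zero, Real.sin_pi_div_four] using hconcave

theorem cos_pi_div_two_mul_le_one_sub_sq {u : ℝ} (hu : |u| ≤ 1) :
    Real.cos (π / 2 * u) ≤ 1 - u ^ 2 := by
  have hchord := pow_le_pow_left₀ (by positivity) (mul_sqrt_two_div_two_le_sin (abs_nonneg u) hu) 2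
  calc Real.cos (π / 2 * u)
      = Real.cos (2 * (|u| * (π / 4))) := by
        rw [← Real.cos_abs, abs_mul, abs_of_pos pi_div_two_pos]; ring_nf
    _ = 1 - 2 * Real.sin (|u| * (π / 4)) ^ 2 := by
        rw [Real.cos_two_mul, Real.cos_sq']; ring
    _ ≤ 1 - 2 * (|u| * (√2 / 2)) ^ 2 := by linarith
    _ = 1 - u ^ 2 := by
        rw [mul_pow, div_pow, Real.sq_sqrt zero_le_two, sq_abs]; ring

end CosineBound

theorem one_sub_norm_sq_pos {E : Type*} [SeminormedAddGroup E] {x : E} (hx : ‖x‖ < 1) :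
    0 < 1 - ‖x‖ ^ 2 :=
  sub_pos.2 (pow_lt_one₀ (norm_nonneg x) hx two_ne_zero)

section DiskAutomorphism

variable {a z : ℂ}

/-- The Möbius automorphism of the unit disk that carries `0` to `a`, for `‖a‖ < 1`. It moves the
base point of the Schwarz lemma from the centre of the disk to `a`. -/
noncomputable def diskShift (a z : ℂ) : ℂ := (z + a) / (1 + conj a * z)

theorem one_add_conj_mul_ne_zero (ha : ‖a‖ < 1) (hz : ‖z‖ ≤ 1) : 1 + conj a * z ≠ 0 := by
  intro h
  have hnorm : ‖a‖ * ‖z‖ = 1 := by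
    simpa using congrArg norm (eq_neg_of_add_eq_zero_right h)
  exact (mul_lt_one_of_nonneg_of_lt_one_left (norm_nonneg a) ha hz).ne hnorm

theorem norm_one_add_conj_mul_sq_sub_norm_add_sq (a z : ℂ) :
    ‖1 + conj a * z‖ ^ 2 - ‖z + a‖ ^ 2 = (1 - ‖a‖ ^ 2) * (1 - ‖z‖ ^ 2) := by
  simp only [Complex.sq_norm, normSq_apply, add_re, add_im, one_re, one_im, mul_re, mul_im,
    conj_re, conj_im]
  ring

theorem diskShift_zero (a : ℂ) : diskShift a 0 = a := by
  simp [diskShift]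

theorem norm_diskShift_lt_one (ha : ‖a‖ < 1) (hz : ‖z‖ < 1) : ‖diskShift a z‖ < 1 := by
  rw [diskShift, norm_div, div_lt_one (norm_pos_iff.2 (one_add_conj_mul_ne_zero ha hz.le))]
  refine lt_of_pow_lt_pow_left₀ 2 (norm_nonneg _) (sub_pos.1 ?_)
  rw [norm_one_add_conj_mul_sq_sub_norm_add_sq]
  exact mul_pos (one_sub_norm_sq_pos ha) (one_sub_norm_sq_pos hz)

theorem mapsTo_diskShift (ha : ‖a‖ < 1) : Set.MapsTo (diskShift a) (ball 0 1) (ball 0 1) :=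
  fun _ hz => mem_ball_zero_iff.2 (norm_diskShift_lt_one ha (mem_ball_zero_iff.1 hz))

theorem differentiableOn_diskShift (ha : ‖a‖ < 1) :
    DifferentiableOn ℂ (diskShift a) (ball 0 1) :=
  DifferentiableOn.div (by fun_prop) (by fun_prop)
    fun _ hz => one_add_conj_mul_ne_zero ha (mem_ball_zero_iff.1 hz).le

theorem hasDerivAt_diskShift_zero (a : ℂ) :
    HasDerivAt (diskShift a) ((1 - ‖a‖ ^ 2 : ℝ) : ℂ) 0 := by
  have hnum : HasDerivAt (fun z : ℂ => z + a) 1 0 := (hasDerivAt_id 0).add_const a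
  have hden : HasDerivAt (fun z : ℂ => 1 + conj a * z) (conj a) 0 := by
    simpa using ((hasDerivAt_id (0 : ℂ)).const_mul (conj a)).const_add 1
  refine (hnum.div hden (by simp)).congr_deriv ?_
  simp [Complex.mul_conj']

end DiskAutomorphism

section SchwarzPick

variable {a : ℂ}

theorem norm_deriv_mul_one_sub_norm_sq_le_of_mapsTo_closedBall
    {E : Type*} [NormedAddCommGroup E] [NormedSpace ℂ E] {F : ℂ → E} {R : ℝ}
    (hF : DifferentiableOn ℂ F (ball 0 1)) (ha : a ∈ ball (0 : ℂ) 1)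
    (hmaps : Set.MapsTo F (ball 0 1) (closedBall (F a) R)) :
    ‖deriv F a‖ * (1 - ‖a‖ ^ 2) ≤ R := by
  have ha' : ‖a‖ < 1 := mem_ball_zero_iff.1 ha
  have hFa : HasDerivAt F (deriv F a) (diskShift a 0) := by
    rw [diskShift_zero]
    exact (hF.differentiableAt (isOpen_ball.mem_nhds ha)).hasDerivAt
  have hderiv := (hFa.scomp 0 (hasDerivAt_diskShift_zero a)).deriv
  have hschwarz : ‖deriv (F ∘ diskShift a) 0‖ ≤ R / 1 :=
    norm_deriv_le_div_of_mapsTo_ball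
      (hF.comp (differentiableOn_diskShift ha') (mapsTo_diskShift ha'))
      (by simpa only [Function.comp_apply, diskShift_zero] using
        hmaps.comp (mapsTo_diskShift ha')) one_pos
  rwa [hderiv, norm_smul, Complex.norm_of_nonneg (one_sub_norm_sq_pos ha').le, div_one,
    mul_comm] at hschwarz

/-- The Cayley transform of the right half-plane onto the unit disk that carries `c` to `0`, for
`0 < c.re`. It turns maps into the half-plane into maps to which the Schwarz lemma applies. -/
noncomputable def cayleyAt (c w : ℂ) : ℂ := (w - c) / (w + conj c)

variable {c w : ℂ}

theorem add_conj_ne_zero (hc : 0 < c.re) (hw : 0 < w.re) : w + conj c ≠ 0 := fun h => by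
  have hre : w.re + c.re = 0 := by simpa using congrArg re h
  linarith

theorem norm_add_conj_sq_sub_norm_sub_sq (c w : ℂ) :
    ‖w + conj c‖ ^ 2 - ‖w - c‖ ^ 2 = 4 * (c.re * w.re) := by
  simp only [Complex.sq_norm, normSq_apply, add_re, add_im, sub_re, sub_im, conj_re, conj_im]
  ring

theorem cayleyAt_self (c : ℂ) : cayleyAt c c = 0 := by
  simp [cayleyAt]

theorem norm_cayleyAt_lt_one (hc : 0 < c.re) (hw : 0 < w.re) : ‖cayleyAt c w‖ < 1 := by
  rw [cayleyAt, norm_div, div_lt_one (norm_pos_iff.2 (add_conj_ne_zero hc hw))]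
  refine lt_of_pow_lt_pow_left₀ 2 (norm_nonneg _) (sub_pos.1 ?_)
  rw [norm_add_conj_sq_sub_norm_sub_sq]
  positivity

theorem differentiableOn_cayleyAt (hc : 0 < c.re) :
    DifferentiableOn ℂ (cayleyAt c) {w | 0 < w.re} :=
  DifferentiableOn.div (by fun_prop) (by fun_prop) fun _ hw => add_conj_ne_zero hc hw

theorem hasDerivAt_cayleyAt_self (hc : 0 < c.re) :
    HasDerivAt (cayleyAt c) ((2 * c.re : ℝ) : ℂ)⁻¹ c := by
  have hne := add_conj_ne_zero hc hc
  refine (((hasDerivAt_id c).sub_const c).div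
    ((hasDerivAt_id c).add_const (conj c)) hne).congr_deriv ?_
  rw [← add_conj]
  simp only [id, sub_self, zero_mul, sub_zero, one_mul]
  field_simp

theorem norm_deriv_mul_one_sub_norm_sq_le_of_re_pos {G : ℂ → ℂ}
    (hG : DifferentiableOn ℂ G (ball 0 1)) (hre : ∀ z ∈ ball (0 : ℂ) 1, 0 < (G z).re)
    (ha : a ∈ ball (0 : ℂ) 1) :
    ‖deriv G a‖ * (1 - ‖a‖ ^ 2) ≤ 2 * (G a).re := by
  have hpos := hre a ha
  have hGa : HasDerivAt G (deriv G a) a :=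
    (hG.differentiableAt (isOpen_ball.mem_nhds ha)).hasDerivAt
  have hmaps : Set.MapsTo (cayleyAt (G a) ∘ G) (ball 0 1)
      (closedBall ((cayleyAt (G a) ∘ G) a) 1) := fun z hz => by
    simpa only [Function.comp_apply, cayleyAt_self, mem_closedBall_zero_iff] using
      (norm_cayleyAt_lt_one hpos (hre z hz)).le
  have hschwarz := norm_deriv_mul_one_sub_norm_sq_le_of_mapsTo_closedBall
    ((differentiableOn_cayleyAt hpos).comp hG hre) ha hmaps
  rw [((hasDerivAt_cayleyAt_self hpos).comp a hGa).deriv, norm_mul, norm_inv,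
    Complex.norm_of_nonneg (by positivity), mul_assoc, inv_mul_le_iff₀ (by positivity),
    mul_one] at hschwarz
  exact hschwarz

theorem norm_deriv_le_cos_of_abs_re_lt_one {F : ℂ → ℂ}
    (hF : DifferentiableOn ℂ F (ball 0 1)) (hre : ∀ z ∈ ball (0 : ℂ) 1, |(F z).re| < 1)
    (ha : a ∈ ball (0 : ℂ) 1) :
    ‖deriv F a‖ ≤ 4 / π * Real.cos (π / 2 * (F a).re) / (1 - ‖a‖ ^ 2) := by
  set c : ℂ := ((π / 2 : ℝ) : ℂ) * I
  have hnorm_c : ‖c‖ = π / 2 := by simp [c, abs_of_pos pi_pos]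
  have hre_exp (w : ℂ) :
      (Complex.exp (c * w)).re = ‖Complex.exp (c * w)‖ * Real.cos (π / 2 * w.re) := by
    rw [Complex.exp_re, Complex.norm_exp]
    simp [c]
  have hexp_pos : ∀ z ∈ ball (0 : ℂ) 1, 0 < (Complex.exp (c * F z)).re := fun z hz => by
    obtain ⟨hlower, hupper⟩ := abs_lt.1 (hre z hz)
    rw [hre_exp]
    refine mul_pos (norm_pos_iff.2 (Complex.exp_ne_zero _)) (Real.cos_pos_of_mem_Ioo ⟨?_, ?_⟩) <;>
      nlinarith [pi_pos]
  have hFa : HasDerivAt F (deriv F a) a :=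
    (hF.differentiableAt (isOpen_ball.mem_nhds ha)).hasDerivAt
  have hhalfplane :=
    norm_deriv_mul_one_sub_norm_sq_le_of_re_pos (hF.const_mul c).cexp hexp_pos ha
  rw [(hFa.const_mul c).cexp.deriv, norm_mul, norm_mul, hnorm_c, hre_exp] at hhalfplane
  have hstrip : π / 2 * ‖deriv F a‖ * (1 - ‖a‖ ^ 2) ≤ 2 * Real.cos (π / 2 * (F a).re) :=
    le_of_mul_le_mul_left (by linarith) (norm_pos_iff.2 (Complex.exp_ne_zero (c * F a)))
  rw [le_div_iff₀ (one_sub_norm_sq_pos (mem_ball_zero_iff.1 ha)), div_mul_eq_mul_div,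
    le_div_iff₀ pi_pos]
  linarith

end SchwarzPick

section HarmonicFunctions

theorem norm_fderiv_re_le_norm_deriv {F : ℂ → ℂ} {z : ℂ} (hF : DifferentiableAt ℂ F z) :
    ‖fderiv ℝ (fun w => (F w).re) z‖ ≤ ‖deriv F z‖ := by
  have hderiv : HasFDerivAt (fun w => (F w).re)
      (reCLM.comp ((fderiv ℂ F z).restrictScalars ℝ)) z :=
    reCLM.hasFDerivAt.comp z (hF.hasFDerivAt.restrictScalars ℝ)
  rw [hderiv.fderiv]
  calc ‖reCLM.comp ((fderiv ℂ F z).restrictScalars ℝ)‖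
      ≤ ‖reCLM‖ * ‖(fderiv ℂ F z).restrictScalars ℝ‖ := ContinuousLinearMap.opNorm_comp_le _ _
    _ = ‖deriv F z‖ := by
      rw [reCLM_norm, one_mul, ContinuousLinearMap.norm_restrictScalars,
        norm_deriv_eq_norm_fderiv]

theorem norm_fderiv_le_of_harmonicOnNhd_of_abs_lt_one {u : ℂ → ℝ}
    (hu : HarmonicOnNhd u (ball 0 1)) (hbound : ∀ z ∈ ball (0 : ℂ) 1, |u z| < 1) {z : ℂ}
    (hz : z ∈ ball (0 : ℂ) 1) :
    ‖fderiv ℝ u z‖ ≤ 4 / π * (1 - u z ^ 2) / (1 - ‖z‖ ^ 2) := by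
  obtain ⟨F, hF, hre : Set.EqOn (fun w => (F w).re) u (ball 0 1)⟩ :=
    hu.exists_analyticOnNhd_ball_re_eq
  have hre_lt : ∀ w ∈ ball (0 : ℂ) 1, |(F w).re| < 1 := fun w hw =>
    (congrArg abs (hre hw)).trans_lt (hbound w hw)
  have hden := one_sub_norm_sq_pos (mem_ball_zero_iff.1 hz)
  calc ‖fderiv ℝ u z‖ = ‖fderiv ℝ (fun w => (F w).re) z‖ := by
        rw [(hre.eventuallyEq_of_mem (isOpen_ball.mem_nhds hz)).fderiv_eq]
    _ ≤ ‖deriv F z‖ := norm_fderiv_re_le_norm_deriv (hF z hz).differentiableAt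
    _ ≤ 4 / π * Real.cos (π / 2 * (F z).re) / (1 - ‖z‖ ^ 2) :=
        norm_deriv_le_cos_of_abs_re_lt_one hF.differentiableOn hre_lt hz
    _ ≤ 4 / π * (1 - (F z).re ^ 2) / (1 - ‖z‖ ^ 2) := by
        gcongr
        exact cos_pi_div_two_mul_le_one_sub_sq (hre_lt z hz).le
    _ = 4 / π * (1 - u z ^ 2) / (1 - ‖z‖ ^ 2) := by rw [← hre hz]

theorem laplacian_eq_fderiv_fderiv_one_add_fderiv_fderiv_I
    {E : Type*} [NormedAddCommGroup E] [NormedSpace ℝ E] {g : ℂ → E} {z : ℂ}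
    (hg : ContDiffAt ℝ 2 g z) :
    Δ g z = fderiv ℝ (fun w => fderiv ℝ g w 1) z 1 + fderiv ℝ (fun w => fderiv ℝ g w I) z I := by
  have hdiff : DifferentiableAt ℝ (fderiv ℝ g) z :=
    (hg.fderiv_right (m := 1) (by norm_num)).differentiableAt (by norm_num)
  have hsecond (v : ℂ) :
      iteratedFDeriv ℝ 2 g z ![v, v] = fderiv ℝ (fun w => fderiv ℝ g w v) z v := by
    rw [iteratedFDeriv_two_apply, fderiv_clm_apply hdiff (differentiableAt_const v)]
    simp
  rw [laplacian_eq_iteratedFDeriv_complexPlane]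
  exact congrArg₂ (· + ·) (hsecond 1) (hsecond I)

theorem harmonicOnNhd_euclideanSpace_of_partials {ι : Type*} [Fintype ι]
    {f : ℂ → EuclideanSpace ℝ ι} {s : Set ℂ} (hs : IsOpen s) (hf : ContDiffOn ℝ 2 f s)
    (hpartials : ∀ i, ∀ z ∈ s, fderiv ℝ (fun w => fderiv ℝ (fun u => f u i) w 1) z 1
      + fderiv ℝ (fun w => fderiv ℝ (fun u => f u i) w I) z I = 0) :
    HarmonicOnNhd f s := by
  have hf_at : ∀ z ∈ s, ContDiffAt ℝ 2 f z := fun z hz => hf.contDiffAt (hs.mem_nhds hz)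
  have hlaplacian : ∀ z ∈ s, Δ f z = 0 := fun z hz => by
    ext i
    have hcoord : ContDiffAt ℝ 2 (fun u => f u i) z :=
      (hf_at z hz).continuousLinearMap_comp (EuclideanSpace.proj (𝕜 := ℝ) i)
    calc Δ f z i = Δ (fun u => f u i) z :=
          ((hf_at z hz).laplacian_CLM_comp_left (l := EuclideanSpace.proj (𝕜 := ℝ) i)).symm
      _ = 0 := by
          rw [laplacian_eq_fderiv_fderiv_one_add_fderiv_fderiv_I hcoord, hpartials i z hz]
  exact fun z hz => ⟨hf_at z hz, Filter.eventuallyEq_of_mem (hs.mem_nhds hz) hlaplacian⟩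

end HarmonicFunctions

theorem directional_deriv_bound_harmonic_map_general
    {E : Type*} [NormedAddCommGroup E] [InnerProductSpace ℝ E] {f : ℂ → E}
    (hf : HarmonicOnNhd f (ball 0 1)) (hf_range : ∀ z ∈ ball (0 : ℂ) 1, ‖f z‖ < 1)
    {b : E} (hb : ‖b‖ ≤ 1) (h : ℂ) {z : ℂ} (hz : z ∈ ball (0 : ℂ) 1) :
    |⟪fderiv ℝ f z h, b⟫_ℝ| ≤ 4 / π * (1 - ⟪f z, b⟫_ℝ ^ 2) / (1 - ‖z‖ ^ 2) * ‖h‖ := by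
  have hcomponent_lt : ∀ w ∈ ball (0 : ℂ) 1, |⟪b, f w⟫_ℝ| < 1 := fun w hw =>
    (abs_real_inner_le_norm b (f w)).trans_lt
      (mul_lt_one_of_nonneg_of_lt_one_right hb (norm_nonneg _) (hf_range w hw))
  have hfderiv : fderiv ℝ (innerSL ℝ b ∘ f) z = (innerSL ℝ b).comp (fderiv ℝ f z) :=
    ((innerSL ℝ b).hasFDerivAt.comp z
      ((hf z hz).1.differentiableAt two_ne_zero).hasFDerivAt).fderiv
  have hbound := norm_fderiv_le_of_harmonicOnNhd_of_abs_lt_one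
    (hf.comp_CLM (innerSL ℝ b)) hcomponent_lt hz
  rw [real_inner_comm, real_inner_comm b (f z)]
  calc |⟪b, fderiv ℝ f z h⟫_ℝ| = ‖fderiv ℝ (innerSL ℝ b ∘ f) z h‖ := by rw [hfderiv]; rfl
    _ ≤ ‖fderiv ℝ (innerSL ℝ b ∘ f) z‖ * ‖h‖ := ContinuousLinearMap.le_opNorm _ _
    _ ≤ 4 / π * (1 - ⟪b, f z⟫_ℝ ^ 2) / (1 - ‖z‖ ^ 2) * ‖h‖ := by gcongr; exact hbound

/-- Directional-derivative form of the Schwarz lemma for vector-valued harmonic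
mappings (step in the proof of Kalaj–Vuorinen, Theorem 2): for a harmonic map
`f` of the unit disk into the unit ball of `ℝⁿ`, unit vectors `b ∈ ℝⁿ` and
`h ∈ ℝ²`, one has `|⟨Df(z)h, b⟩| ≤ (4/π)(1 - ⟨f(z), b⟩²)/(1 - |z|²)`. -/
theorem directional_deriv_bound_harmonic_map
    (n : ℕ) (f : ℂ → EuclideanSpace ℝ (Fin n))
    (hf_smooth : ContDiffOn ℝ 2 f (ball (0 : ℂ) 1))
    (hf_harm : ∀ i : Fin n, ∀ z ∈ ball (0 : ℂ) 1,
      fderiv ℝ (fun w => fderiv ℝ (fun u => f u i) w 1) z 1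
        + fderiv ℝ (fun w => fderiv ℝ (fun u => f u i) w Complex.I) z Complex.I = 0)
    (hf_range : ∀ z ∈ ball (0 : ℂ) 1, ‖f z‖ < 1)
    (b : EuclideanSpace ℝ (Fin n)) (hb : ‖b‖ = 1)
    (h : ℂ) (hh : ‖h‖ = 1) :
    ∀ z ∈ ball (0 : ℂ) 1,
      |(⟪fderiv ℝ f z h, b⟫_ℝ)| ≤ (4 / π) * (1 - ⟪f z, b⟫_ℝ ^ 2) / (1 - ‖z‖ ^ 2) := by
  intro z hz
  have hf := harmonicOnNhd_euclideanSpace_of_partials isOpen_ball hf_smooth hf_harm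
  simpa only [hh, mul_one] using
    directional_deriv_bound_harmonic_map_general hf hf_range hb.le h hz
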